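/- The infinite Hankel matrix of the normalized moment sequence has rank at most n in the following sense: for every choice of column indices 0 ≤ j_0 < j_1 < ⋯ < j_n, the (n+1)×(n+1) matrix whose (i,t)-entry is c_{i + j_t} (for 0 ≤ i, t ≤ n) has determinant zero. -/

import Mathlib

open Finset Polynomial PowerSeries

/-- The complete homogeneous symmetric polynomial of degree `j` evaluated at
`v : Fin m → ℝ` (sum of all monomials of total degree `j`, with `hsymm 0 v = 1`). -/
noncomputable def hsymm {m : ℕ} (j : ℕ) (v : Fin m → ℝ) : ℝ :=
  haveI := Classical.decPred (fun f : Fin j → Fin m => Monotone f)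
  ∑ f ∈ Finset.univ.filter (fun f : Fin j → Fin m => Monotone f), ∏ i, v (f i)

/-- The normalized moment sequence: `c_j = 0` for `j < d` and
`c_{d+j} = Σ_{i=1}^{n-d} α_i h_j(x_i, …, x_{i+d})`. -/
noncomputable def cseq (d n : ℕ) (x : Fin n → ℝ) (α : Fin (n - d) → ℝ) (j : ℕ) : ℝ :=
  if d ≤ j then
    ∑ i : Fin (n - d), α i * hsymm (j - d)
      (fun k : Fin (d + 1) => x ⟨i.1 + k.1, by have h1 := i.2; have h2 := k.2; omega⟩)
  else 0

/-- `Q(t) = ∏_{r=1}^{n} (1 - x_r t)`. -/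
noncomputable def Qpoly (n : ℕ) (x : Fin n → ℝ) : Polynomial ℝ :=
  ∏ r : Fin n, (1 - Polynomial.C (x r) * Polynomial.X)

/-- `R(t) = Σ_{i=1}^{n-d} α_i ∏_{r ∉ {i,…,i+d}} (1 - x_r t)`. -/
noncomputable def Rpoly (d n : ℕ) (x : Fin n → ℝ) (α : Fin (n - d) → ℝ) : Polynomial ℝ :=
  ∑ i : Fin (n - d), Polynomial.C (α i) *
    ∏ r ∈ Finset.univ.filter (fun r : Fin n => r.1 < i.1 ∨ i.1 + d < r.1),
      (1 - Polynomial.C (x r) * Polynomial.X)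

lemma hsymm_zero_eq {m : ℕ} (v : Fin m → ℝ) : hsymm 0 v = 1 := by
  classical
  unfold hsymm
  have : (Finset.univ.filter (fun f : Fin 0 → Fin m => Monotone f)) = Finset.univ := by
    ext f
    simp only [Finset.mem_filter, Finset.mem_univ, true_and, iff_true]
    intro a
    exact a.elim0
  convert (show ∑ f ∈ Finset.univ.filter (fun f : Fin 0 → Fin m => Monotone f), ∏ i, v (f i) = 1 by
    rw [this]; simp)

lemma hsymm_succ_rec {m : ℕ} (j : ℕ) (v : Fin (m + 1) → ℝ) :
    hsymm (j + 1) v = v 0 * hsymm j v + hsymm (j + 1) (fun k : Fin m => v k.succ) := by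
  classical
  unfold hsymm
  simp only []
  rw [← Finset.sum_filter_add_sum_filter_not _ (fun f : Fin (j + 1) → Fin (m + 1) => f 0 = 0),
    Finset.mul_sum]
  congr 1
  · refine Finset.sum_bij' (fun f _ => fun i => f i.succ)
      (fun g _ => Fin.cons 0 g) ?_ ?_ ?_ ?_ ?_
    · intro f hf
      simp only [Finset.mem_filter, Finset.mem_univ, true_and] at hf ⊢
      intro a b hab
      exact hf.1 (Fin.succ_le_succ_iff.mpr hab)
    · intro g hg
      simp only [Finset.mem_filter, Finset.mem_univ, true_and] at hg ⊢
      refine ⟨?_, by simp⟩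
      intro a b hab
      induction a using Fin.cases with
      | zero => simp
      | succ a =>
        induction b using Fin.cases with
        | zero => exact absurd hab (by simp)
        | succ b => simpa using hg (Fin.succ_le_succ_iff.mp hab)
    · intro f hf
      simp only [Finset.mem_filter, Finset.mem_univ, true_and] at hf
      funext i
      induction i using Fin.cases with
      | zero => simp [hf.2]
      | succ i => simp
    · intro g hg
      funext i
      simp
    · intro f hf
      simp only [Finset.mem_filter, Finset.mem_univ, true_and] at hf
      rw [Fin.prod_univ_succ, hf.2]
  · symm
    refine Finset.sum_bij (fun f _ => fun i => (f i).succ) ?_ ?_ ?_ ?_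
    · intro f hf
      simp only [Finset.mem_filter, Finset.mem_univ, true_and] at hf ⊢
      refine ⟨?_, Fin.succ_ne_zero _⟩
      intro a b hab
      exact Fin.succ_le_succ_iff.mpr (hf hab)
    · intro f _ g _ h
      funext i
      exact Fin.succ_injective _ (congrFun h i)
    · intro g hg
      simp only [Finset.mem_filter, Finset.mem_univ, true_and] at hg
      have hne : ∀ i, g i ≠ 0 := by
        intro i hi
        have := hg.1 (Fin.zero_le i)
        rw [hi] at this
        exact hg.2 (Fin.le_zero_iff.mp this)
      refine ⟨fun i => (g i).pred (hne i), ?_, ?_⟩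
      · simp only [Finset.mem_filter, Finset.mem_univ, true_and]
        intro a b hab
        exact Fin.pred_le_pred_iff.mpr (hg.1 hab)
      · funext i
        simp
    · intro f _
      rfl

/-- The left shift on sequences. -/
noncomputable def shiftL : Module.End ℝ (ℕ → ℝ) where
  toFun f := fun k => f (k + 1)
  map_add' _ _ := rfl
  map_smul' _ _ := rfl

lemma shiftL_pow (i : ℕ) (f : ℕ → ℝ) (k : ℕ) : (shiftL ^ i) f k = f (i + k) := by
  induction i generalizing k with
  | zero => simp
  | succ i ih =>
    rw [pow_succ', Module.End.mul_apply]
    change (shiftL ^ i) f (k + 1) = _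
    rw [ih]
    congr 1
    omega

noncomputable def gseq (m : ℕ) (v : Fin (m + 1) → ℝ) (k : ℕ) : ℝ :=
  if m ≤ k then hsymm (k - m) v else 0

lemma gseq_step (m : ℕ) (v : Fin (m + 2) → ℝ) :
    Polynomial.aeval shiftL (Polynomial.X - Polynomial.C (v 0)) (gseq (m + 1) v)
      = gseq m (fun k => v k.succ) := by
  funext k
  simp only [map_sub, Polynomial.aeval_X, Polynomial.aeval_C, LinearMap.sub_apply, Pi.sub_apply,
    Module.algebraMap_end_apply, Pi.smul_apply, smul_eq_mul]
  change gseq (m + 1) v (k + 1) - _ = _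
  unfold gseq
  rcases lt_trichotomy k m with h | h | h
  · rw [if_neg (by omega), if_neg (by omega), if_neg (by omega)]; simp
  · subst h
    simp [hsymm_zero_eq]
  · obtain ⟨j, rfl⟩ : ∃ j, k = m + 1 + j := ⟨k - (m + 1), by omega⟩
    rw [if_pos (by omega), if_pos (by omega), if_pos (by omega),
      show m + 1 + j + 1 - (m + 1) = j + 1 by omega, show m + 1 + j - (m + 1) = j by omega,
      show m + 1 + j - m = j + 1 by omega, hsymm_succ_rec]
    ring

lemma gseq_base (v : Fin 1 → ℝ) :
    Polynomial.aeval shiftL (Polynomial.X - Polynomial.C (v 0)) (gseq 0 v) = 0 := by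
  funext k
  simp only [map_sub, Polynomial.aeval_X, Polynomial.aeval_C, LinearMap.sub_apply, Pi.sub_apply,
    Module.algebraMap_end_apply, Pi.smul_apply, smul_eq_mul]
  change gseq 0 v (k + 1) - _ = _
  unfold gseq
  simp only [Nat.zero_le, if_true, Nat.sub_zero]
  rw [hsymm_succ_rec]
  have : hsymm (k + 1) (fun i : Fin 0 => v i.succ) = 0 := by
    unfold hsymm
    apply Finset.sum_eq_zero
    intro f _
    exact (f 0).elim0
  rw [this]
  simp

lemma gseq_ann (m : ℕ) (v : Fin (m + 1) → ℝ) :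
    Polynomial.aeval shiftL (∏ k, (Polynomial.X - Polynomial.C (v k))) (gseq m v) = 0 := by
  induction m with
  | zero => simpa using gseq_base v
  | succ m ih =>
    rw [Fin.prod_univ_succ, mul_comm, map_mul, Module.End.mul_apply, gseq_step]
    exact ih _

/-- **Hankel rank bound for the normalized moments.** Every `(n+1)×(n+1)` minor
of the infinite Hankel matrix `(c_{i+j})` vanishes: for all column indices
`j_0 < j_1 < ⋯ < j_n`, the determinant of `(c_{i + j_t})_{0 ≤ i,t ≤ n}` is zero. -/
theorem hankel_rank_at_most_n (d n : ℕ) (hn : d + 1 ≤ n)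
    (x : Fin n → ℝ) (hx : StrictMono x) (α : Fin (n - d) → ℝ) :
    ∀ js : Fin (n + 1) → ℕ, StrictMono js →
      (Matrix.of fun (i t : Fin (n + 1)) => cseq d n x α (i.1 + js t)).det = 0 := by
  intro js _
  set P : Polynomial ℝ := ∏ r, (Polynomial.X - Polynomial.C (x r)) with hP
  have hmon : P.Monic := Polynomial.monic_prod_X_sub_C x Finset.univ
  have hdeg : P.natDegree = n := by
    rw [hP, Polynomial.natDegree_finsetProd_X_sub_C_eq_card]; simp
  have hc : cseq d n x α = ∑ i : Fin (n - d), α i • gseq d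
      (fun k : Fin (d + 1) => x ⟨i.1 + k.1, by have h1 := i.2; have h2 := k.2; omega⟩) := by
    funext k
    simp only [Finset.sum_apply, Pi.smul_apply, smul_eq_mul, cseq, gseq]
    split_ifs <;> simp
  have hann : Polynomial.aeval shiftL P (cseq d n x α) = 0 := by
    rw [hc, map_sum]
    apply Finset.sum_eq_zero
    intro i _
    rw [map_smul]
    let e : Fin (d + 1) ↪ Fin n :=
      ⟨fun k => ⟨i.1 + k.1, by have h1 := i.2; have h2 := k.2; omega⟩, by
        intro a b h
        simp only [Fin.mk.injEq] at h
        apply Fin.ext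
        omega⟩
    have hdvd : (∏ k, (Polynomial.X - Polynomial.C (x (e k)))) ∣ P := by
      rw [hP, ← Finset.prod_map Finset.univ e (fun r => Polynomial.X - Polynomial.C (x r))]
      exact Finset.prod_dvd_prod_of_subset _ _ _ (Finset.subset_univ _)
    obtain ⟨q, hq⟩ := hdvd
    have h0 := gseq_ann d (fun k => x (e k))
    rw [hq, mul_comm, map_mul, Module.End.mul_apply]
    change α i • (Polynomial.aeval shiftL q) (Polynomial.aeval shiftL (∏ k, (Polynomial.X - Polynomial.C (x (e k))))
      (gseq d (fun k => x (e k)))) = 0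
    rw [h0, map_zero, smul_zero]
  rw [← Matrix.exists_vecMul_eq_zero_iff]
  refine ⟨fun i => P.coeff i.1, ?_, ?_⟩
  · intro h
    have h1 := congrFun h (Fin.last n)
    have h2 : P.coeff n = 1 := by
      have := hmon.coeff_natDegree
      rwa [hdeg] at this
    simp [h2] at h1
  · funext t
    have h1 := congrFun hann (js t)
    rw [Polynomial.aeval_eq_sum_range, hdeg] at h1
    simp only [LinearMap.sum_apply, LinearMap.smul_apply, Finset.sum_apply, Pi.smul_apply,
      shiftL_pow, smul_eq_mul, Pi.zero_apply] at h1
    rw [Finset.sum_range] at h1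
    simpa [Matrix.vecMul, dotProduct] using h1
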